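/- Gentzen's Hauptsatz for LKp: the cut rule is admissible in LKp, that is, every sequent provable in LKp has a proof in LKp that contains no instance of the cut rule. -/

import Mathlib

/-!
The system LKp: the propositional fragment of Gentzen's sequent calculus LK.
Sequents are pairs of finite lists of formulas.  In the rules below, a list
written `Γ, P` in the paper is encoded as `Γ ++ [P]` on the left of the
turnstile and as `P :: Δ` on the right (matching the usual presentation
`Γ ⊢ P, Δ`).
-/

namespace LKp

/-- Classical propositional formulas over countably many atoms. -/
inductive Formula : Type where
  | atom : ℕ → Formula
  | neg  : Formula → Formula
  | and  : Formula → Formula → Formula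
  | or   : Formula → Formula → Formula
  | imp  : Formula → Formula → Formula
deriving DecidableEq

/-- A sequent `Γ ⊢ Δ` is a pair of finite lists of formulas. -/
abbrev Sequent := List Formula × List Formula

/-- The degree of a formula: `δ(a) = 1`, `δ(¬P) = 1 + δ(P)`,
`δ(P∧Q) = δ(P∨Q) = δ(P→Q) = 1 + max(δ(P), δ(Q))`. -/
def Formula.degree : Formula → ℕ
  | .atom _ => 1
  | .neg P => P.degree + 1
  | .and P Q => max P.degree Q.degree + 1
  | .or P Q => max P.degree Q.degree + 1
  | .imp P Q => max P.degree Q.degree + 1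

/-- Derivations in LKp: trees of rule instances, with `hyp` marking an open
leaf (a premise of the derivation). -/
inductive Deriv : Sequent → Type where
  | hyp (S : Sequent) : Deriv S
  | ax (P : Formula) : Deriv ([P], [P])
  | permL (Γ Γ' Δ : List Formula) (P Q : Formula) :
      Deriv (Γ ++ P :: Q :: Γ', Δ) → Deriv (Γ ++ Q :: P :: Γ', Δ)
  | permR (Γ Δ Δ' : List Formula) (P Q : Formula) :
      Deriv (Γ, Δ ++ P :: Q :: Δ') → Deriv (Γ, Δ ++ Q :: P :: Δ')
  | contL (Γ Δ : List Formula) (P : Formula) :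
      Deriv (Γ ++ [P, P], Δ) → Deriv (Γ ++ [P], Δ)
  | contR (Γ Δ : List Formula) (Q : Formula) :
      Deriv (Γ, Q :: Q :: Δ) → Deriv (Γ, Q :: Δ)
  | weakL (Γ Δ : List Formula) (P : Formula) :
      Deriv (Γ, Δ) → Deriv (Γ ++ [P], Δ)
  | weakR (Γ Δ : List Formula) (Q : Formula) :
      Deriv (Γ, Δ) → Deriv (Γ, Q :: Δ)
  | cut (Γ Δ Γ' Δ' : List Formula) (P : Formula) :
      Deriv (Γ, P :: Δ) → Deriv (Γ' ++ [P], Δ') → Deriv (Γ ++ Γ', Δ ++ Δ')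
  | andL1 (Γ Δ : List Formula) (P Q : Formula) :
      Deriv (Γ ++ [P], Δ) → Deriv (Γ ++ [P.and Q], Δ)
  | andL2 (Γ Δ : List Formula) (P Q : Formula) :
      Deriv (Γ ++ [Q], Δ) → Deriv (Γ ++ [P.and Q], Δ)
  | andR (Γ Δ : List Formula) (P Q : Formula) :
      Deriv (Γ, P :: Δ) → Deriv (Γ, Q :: Δ) → Deriv (Γ, (P.and Q) :: Δ)
  | orR1 (Γ Δ : List Formula) (P Q : Formula) :
      Deriv (Γ, P :: Δ) → Deriv (Γ, (P.or Q) :: Δ)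
  | orR2 (Γ Δ : List Formula) (P Q : Formula) :
      Deriv (Γ, Q :: Δ) → Deriv (Γ, (P.or Q) :: Δ)
  | orL (Γ Δ : List Formula) (P Q : Formula) :
      Deriv (Γ ++ [P], Δ) → Deriv (Γ ++ [Q], Δ) → Deriv (Γ ++ [P.or Q], Δ)
  | impR (Γ Δ : List Formula) (P Q : Formula) :
      Deriv (Γ ++ [P], Q :: Δ) → Deriv (Γ, (P.imp Q) :: Δ)
  | impL (Γ Δ : List Formula) (P Q : Formula) :
      Deriv (Γ, P :: Δ) → Deriv (Γ ++ [Q], Δ) → Deriv (Γ ++ [P.imp Q], Δ)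
  | negL (Γ Δ : List Formula) (P : Formula) :
      Deriv (Γ, P :: Δ) → Deriv (Γ ++ [P.neg], Δ)
  | negR (Γ Δ : List Formula) (P : Formula) :
      Deriv (Γ ++ [P], Δ) → Deriv (Γ, P.neg :: Δ)

/-- The degree of a derivation: the maximum of the degrees of the cut
formulas occurring in it (`0` if there is no cut). -/
def Deriv.degree : ∀ {S : Sequent}, Deriv S → ℕ
  | _, .hyp _ => 0
  | _, .ax _ => 0
  | _, .permL _ _ _ _ _ d => Deriv.degree d
  | _, .permR _ _ _ _ _ d => Deriv.degree d
  | _, .contL _ _ _ d => Deriv.degree d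
  | _, .contR _ _ _ d => Deriv.degree d
  | _, .weakL _ _ _ d => Deriv.degree d
  | _, .weakR _ _ _ d => Deriv.degree d
  | _, .cut _ _ _ _ P d₁ d₂ => max P.degree (max (Deriv.degree d₁) (Deriv.degree d₂))
  | _, .andL1 _ _ _ _ d => Deriv.degree d
  | _, .andL2 _ _ _ _ d => Deriv.degree d
  | _, .andR _ _ _ _ d₁ d₂ => max (Deriv.degree d₁) (Deriv.degree d₂)
  | _, .orR1 _ _ _ _ d => Deriv.degree d
  | _, .orR2 _ _ _ _ d => Deriv.degree d
  | _, .orL _ _ _ _ d₁ d₂ => max (Deriv.degree d₁) (Deriv.degree d₂)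
  | _, .impR _ _ _ _ d => Deriv.degree d
  | _, .impL _ _ _ _ d₁ d₂ => max (Deriv.degree d₁) (Deriv.degree d₂)
  | _, .negL _ _ _ d => Deriv.degree d
  | _, .negR _ _ _ d => Deriv.degree d

/-- A derivation is a proof when all of its leaves are axiom instances,
i.e. it has no open hypothesis. -/
def Deriv.isProof : ∀ {S : Sequent}, Deriv S → Prop
  | _, .hyp _ => False
  | _, .ax _ => True
  | _, .permL _ _ _ _ _ d => Deriv.isProof d
  | _, .permR _ _ _ _ _ d => Deriv.isProof d
  | _, .contL _ _ _ d => Deriv.isProof d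
  | _, .contR _ _ _ d => Deriv.isProof d
  | _, .weakL _ _ _ d => Deriv.isProof d
  | _, .weakR _ _ _ d => Deriv.isProof d
  | _, .cut _ _ _ _ _ d₁ d₂ => Deriv.isProof d₁ ∧ Deriv.isProof d₂
  | _, .andL1 _ _ _ _ d => Deriv.isProof d
  | _, .andL2 _ _ _ _ d => Deriv.isProof d
  | _, .andR _ _ _ _ d₁ d₂ => Deriv.isProof d₁ ∧ Deriv.isProof d₂
  | _, .orR1 _ _ _ _ d => Deriv.isProof d
  | _, .orR2 _ _ _ _ d => Deriv.isProof d
  | _, .orL _ _ _ _ d₁ d₂ => Deriv.isProof d₁ ∧ Deriv.isProof d₂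
  | _, .impR _ _ _ _ d => Deriv.isProof d
  | _, .impL _ _ _ _ d₁ d₂ => Deriv.isProof d₁ ∧ Deriv.isProof d₂
  | _, .negL _ _ _ d => Deriv.isProof d
  | _, .negR _ _ _ d => Deriv.isProof d

/-- The list of open premises (hypothesis leaves) of a derivation. -/
def Deriv.prems : ∀ {S : Sequent}, Deriv S → List Sequent
  | _, .hyp S => [S]
  | _, .ax _ => []
  | _, .permL _ _ _ _ _ d => Deriv.prems d
  | _, .permR _ _ _ _ _ d => Deriv.prems d
  | _, .contL _ _ _ d => Deriv.prems d
  | _, .contR _ _ _ d => Deriv.prems d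
  | _, .weakL _ _ _ d => Deriv.prems d
  | _, .weakR _ _ _ d => Deriv.prems d
  | _, .cut _ _ _ _ _ d₁ d₂ => Deriv.prems d₁ ++ Deriv.prems d₂
  | _, .andL1 _ _ _ _ d => Deriv.prems d
  | _, .andL2 _ _ _ _ d => Deriv.prems d
  | _, .andR _ _ _ _ d₁ d₂ => Deriv.prems d₁ ++ Deriv.prems d₂
  | _, .orR1 _ _ _ _ d => Deriv.prems d
  | _, .orR2 _ _ _ _ d => Deriv.prems d
  | _, .orL _ _ _ _ d₁ d₂ => Deriv.prems d₁ ++ Deriv.prems d₂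
  | _, .impR _ _ _ _ d => Deriv.prems d
  | _, .impL _ _ _ _ d₁ d₂ => Deriv.prems d₁ ++ Deriv.prems d₂
  | _, .negL _ _ _ d => Deriv.prems d
  | _, .negR _ _ _ d => Deriv.prems d

/-- A derivation is cut-free when it contains no instance of the cut rule. -/
def Deriv.cutFree : ∀ {S : Sequent}, Deriv S → Prop
  | _, .hyp _ => True
  | _, .ax _ => True
  | _, .permL _ _ _ _ _ d => Deriv.cutFree d
  | _, .permR _ _ _ _ _ d => Deriv.cutFree d
  | _, .contL _ _ _ d => Deriv.cutFree d
  | _, .contR _ _ _ d => Deriv.cutFree d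
  | _, .weakL _ _ _ d => Deriv.cutFree d
  | _, .weakR _ _ _ d => Deriv.cutFree d
  | _, .cut _ _ _ _ _ _ _ => False
  | _, .andL1 _ _ _ _ d => Deriv.cutFree d
  | _, .andL2 _ _ _ _ d => Deriv.cutFree d
  | _, .andR _ _ _ _ d₁ d₂ => Deriv.cutFree d₁ ∧ Deriv.cutFree d₂
  | _, .orR1 _ _ _ _ d => Deriv.cutFree d
  | _, .orR2 _ _ _ _ d => Deriv.cutFree d
  | _, .orL _ _ _ _ d₁ d₂ => Deriv.cutFree d₁ ∧ Deriv.cutFree d₂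
  | _, .impR _ _ _ _ d => Deriv.cutFree d
  | _, .impL _ _ _ _ d₁ d₂ => Deriv.cutFree d₁ ∧ Deriv.cutFree d₂
  | _, .negL _ _ _ d => Deriv.cutFree d
  | _, .negR _ _ _ d => Deriv.cutFree d

end LKp

namespace LKp

/-!
The proof is semantic. Every rule, cut included, preserves classical validity, so provable sequents
are valid. Conversely a valid sequent has a cut-free proof: read from conclusion to premises, each
logical rule, with left `∧` and right `∨` in multiplicative form, preserves validity and removes a
connective, and a valid sequent of atoms has an atom in common to both sides.
-/

/-- `Γ ⊢ Δ` has a cut-free proof. -/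
def CutFreeProvable (Γ Δ : List Formula) : Prop :=
  ∃ Ψ : Deriv (Γ, Δ), Ψ.isProof ∧ Ψ.cutFree

namespace CutFreeProvable

variable {Γ Γ' Δ Δ' Θ : List Formula} {P Q : Formula}

theorem permL (hΓ : Γ.Perm Γ') (h : CutFreeProvable Γ Δ) : CutFreeProvable Γ' Δ := by
  -- The prefix `Θ` lets the induction pass under a `cons`.
  suffices ∀ Θ, CutFreeProvable (Θ ++ Γ) Δ → CutFreeProvable (Θ ++ Γ') Δ from this [] h
  clear h
  induction hΓ with
  | nil => exact fun _ h => h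
  | cons P _ ih =>
    exact fun Θ => by simpa only [← List.append_cons] using ih (Θ ++ [P])
  | swap P Q Γ => exact fun Θ ⟨d, hp, hc⟩ => ⟨.permL Θ Γ Δ Q P d, hp, hc⟩
  | trans _ _ ih₁ ih₂ => exact fun Θ h => ih₂ Θ (ih₁ Θ h)

theorem permR (hΔ : Δ.Perm Δ') (h : CutFreeProvable Γ Δ) : CutFreeProvable Γ Δ' := by
  suffices ∀ Θ, CutFreeProvable Γ (Θ ++ Δ) → CutFreeProvable Γ (Θ ++ Δ') from this [] h
  clear h
  induction hΔ with
  | nil => exact fun _ h => h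
  | cons P _ ih =>
    exact fun Θ => by simpa only [← List.append_cons] using ih (Θ ++ [P])
  | swap P Q Δ => exact fun Θ ⟨d, hp, hc⟩ => ⟨.permR Γ Θ Δ Q P d, hp, hc⟩
  | trans _ _ ih₁ ih₂ => exact fun Θ h => ih₂ Θ (ih₁ Θ h)

theorem append_singleton_iff : CutFreeProvable (Γ ++ [P]) Δ ↔ CutFreeProvable (P :: Γ) Δ :=
  have hperm := List.perm_append_singleton P Γ
  ⟨permL hperm, permL hperm.symm⟩

theorem weakL (h : CutFreeProvable Γ Δ) : CutFreeProvable (P :: Γ) Δ :=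
  let ⟨d, hp, hc⟩ := h
  append_singleton_iff.1 ⟨.weakL Γ Δ P d, hp, hc⟩

theorem weakR (h : CutFreeProvable Γ Δ) : CutFreeProvable Γ (P :: Δ) :=
  let ⟨d, hp, hc⟩ := h
  ⟨.weakR Γ Δ P d, hp, hc⟩

theorem contL (hP : P ∈ Γ) (h : CutFreeProvable (P :: Γ) Δ) : CutFreeProvable Γ Δ := by
  obtain ⟨Γ₁, Γ₂, rfl⟩ := List.append_of_mem hP
  have hperm : (P :: (Γ₁ ++ P :: Γ₂)).Perm (Γ₁ ++ Γ₂ ++ [P, P]) :=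
    (List.perm_middle.cons P).trans (List.perm_append_comm (l₁ := [P, P]))
  obtain ⟨d, hp, hc⟩ := permL hperm h
  exact permL List.perm_middle.symm (append_singleton_iff.1 ⟨.contL (Γ₁ ++ Γ₂) Δ P d, hp, hc⟩)

theorem contR (hP : P ∈ Δ) (h : CutFreeProvable Γ (P :: Δ)) : CutFreeProvable Γ Δ := by
  obtain ⟨Δ₁, Δ₂, rfl⟩ := List.append_of_mem hP
  obtain ⟨d, hp, hc⟩ := permR (List.perm_middle.cons P) h
  exact permR List.perm_middle.symm ⟨.contR Γ (Δ₁ ++ Δ₂) P d, hp, hc⟩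

theorem weakL_append (h : CutFreeProvable Γ Δ) : CutFreeProvable (Θ ++ Γ) Δ := by
  induction Θ with
  | nil => exact h
  | cons _ _ ih => exact ih.weakL

theorem weakR_append (h : CutFreeProvable Γ Δ) : CutFreeProvable Γ (Θ ++ Δ) := by
  induction Θ with
  | nil => exact h
  | cons _ _ ih => exact ih.weakR

theorem contL_append (hΘ : Θ ⊆ Γ) (h : CutFreeProvable (Θ ++ Γ) Δ) : CutFreeProvable Γ Δ := by
  induction Θ with
  | nil => exact h
  | cons P Θ ih =>
    obtain ⟨hP, hΘ⟩ := List.cons_subset.1 hΘ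
    exact ih hΘ (contL (List.mem_append_right Θ hP) h)

theorem contR_append (hΘ : Θ ⊆ Δ) (h : CutFreeProvable Γ (Θ ++ Δ)) : CutFreeProvable Γ Δ := by
  induction Θ with
  | nil => exact h
  | cons P Θ ih =>
    obtain ⟨hP, hΘ⟩ := List.cons_subset.1 hΘ
    exact ih hΘ (contR (List.mem_append_right Θ hP) h)

theorem mono (hΓ : Γ ⊆ Γ') (hΔ : Δ ⊆ Δ') (h : CutFreeProvable Γ Δ) : CutFreeProvable Γ' Δ' :=
  have hL : CutFreeProvable Γ' Δ := contL_append hΓ (permL List.perm_append_comm h.weakL_append)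
  contR_append hΔ (permR List.perm_append_comm hL.weakR_append)

theorem ax (P : Formula) : CutFreeProvable [P] [P] :=
  ⟨.ax P, trivial, trivial⟩

theorem negL (h : CutFreeProvable Γ (P :: Δ)) : CutFreeProvable (P.neg :: Γ) Δ :=
  let ⟨d, hp, hc⟩ := h
  append_singleton_iff.1 ⟨.negL Γ Δ P d, hp, hc⟩

theorem negR (h : CutFreeProvable (P :: Γ) Δ) : CutFreeProvable Γ (P.neg :: Δ) :=
  let ⟨d, hp, hc⟩ := append_singleton_iff.2 h
  ⟨.negR Γ Δ P d, hp, hc⟩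

theorem andL₁ (h : CutFreeProvable (P :: Γ) Δ) : CutFreeProvable (P.and Q :: Γ) Δ :=
  let ⟨d, hp, hc⟩ := append_singleton_iff.2 h
  append_singleton_iff.1 ⟨.andL1 Γ Δ P Q d, hp, hc⟩

theorem andL₂ (h : CutFreeProvable (Q :: Γ) Δ) : CutFreeProvable (P.and Q :: Γ) Δ :=
  let ⟨d, hp, hc⟩ := append_singleton_iff.2 h
  append_singleton_iff.1 ⟨.andL2 Γ Δ P Q d, hp, hc⟩

theorem andL (h : CutFreeProvable (P :: Q :: Γ) Δ) : CutFreeProvable (P.and Q :: Γ) Δ :=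
  have h' : CutFreeProvable (Q :: P.and Q :: Γ) Δ := permL (.swap Q (P.and Q) Γ) h.andL₁
  contL List.mem_cons_self h'.andL₂

theorem andR (hP : CutFreeProvable Γ (P :: Δ)) (hQ : CutFreeProvable Γ (Q :: Δ)) :
    CutFreeProvable Γ (P.and Q :: Δ) :=
  let ⟨d₁, hp₁, hc₁⟩ := hP
  let ⟨d₂, hp₂, hc₂⟩ := hQ
  ⟨.andR Γ Δ P Q d₁ d₂, ⟨hp₁, hp₂⟩, ⟨hc₁, hc₂⟩⟩

theorem orL (hP : CutFreeProvable (P :: Γ) Δ) (hQ : CutFreeProvable (Q :: Γ) Δ) :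
    CutFreeProvable (P.or Q :: Γ) Δ :=
  let ⟨d₁, hp₁, hc₁⟩ := append_singleton_iff.2 hP
  let ⟨d₂, hp₂, hc₂⟩ := append_singleton_iff.2 hQ
  append_singleton_iff.1 ⟨.orL Γ Δ P Q d₁ d₂, ⟨hp₁, hp₂⟩, ⟨hc₁, hc₂⟩⟩

theorem orR₁ (h : CutFreeProvable Γ (P :: Δ)) : CutFreeProvable Γ (P.or Q :: Δ) :=
  let ⟨d, hp, hc⟩ := h
  ⟨.orR1 Γ Δ P Q d, hp, hc⟩

theorem orR₂ (h : CutFreeProvable Γ (Q :: Δ)) : CutFreeProvable Γ (P.or Q :: Δ) :=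
  let ⟨d, hp, hc⟩ := h
  ⟨.orR2 Γ Δ P Q d, hp, hc⟩

theorem orR (h : CutFreeProvable Γ (P :: Q :: Δ)) : CutFreeProvable Γ (P.or Q :: Δ) :=
  have h' : CutFreeProvable Γ (Q :: P.or Q :: Δ) := permR (.swap Q (P.or Q) Δ) h.orR₁
  contR List.mem_cons_self h'.orR₂

theorem impL (hP : CutFreeProvable Γ (P :: Δ)) (hQ : CutFreeProvable (Q :: Γ) Δ) :
    CutFreeProvable (P.imp Q :: Γ) Δ :=
  let ⟨d₁, hp₁, hc₁⟩ := hP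
  let ⟨d₂, hp₂, hc₂⟩ := append_singleton_iff.2 hQ
  append_singleton_iff.1 ⟨.impL Γ Δ P Q d₁ d₂, ⟨hp₁, hp₂⟩, ⟨hc₁, hc₂⟩⟩

theorem impR (h : CutFreeProvable (P :: Γ) (Q :: Δ)) : CutFreeProvable Γ (P.imp Q :: Δ) :=
  let ⟨d, hp, hc⟩ := append_singleton_iff.2 h
  ⟨.impR Γ Δ P Q d, hp, hc⟩

end CutFreeProvable

/-- Truth of a formula under the valuation `v` of the atoms. -/
def Formula.eval (v : ℕ → Prop) : Formula → Prop
  | .atom a => v a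
  | .neg P => ¬ P.eval v
  | .and P Q => P.eval v ∧ Q.eval v
  | .or P Q => P.eval v ∨ Q.eval v
  | .imp P Q => P.eval v → Q.eval v

/-- `Γ ⊢ Δ` is satisfied by `v`: if `v` makes every formula of `Γ` true, it makes some formula of
`Δ` true. -/
def SatisfiedBy (v : ℕ → Prop) (Γ Δ : List Formula) : Prop :=
  (∀ P ∈ Γ, P.eval v) → ∃ Q ∈ Δ, Q.eval v

/-- `Γ ⊢ Δ` is classically valid: satisfied by every valuation. -/
def Valid (Γ Δ : List Formula) : Prop :=
  ∀ v, SatisfiedBy v Γ Δ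

section Semantics

variable {v : ℕ → Prop} {Γ Γ' Δ Δ' : List Formula} {P Q : Formula}

theorem SatisfiedBy.mono (hΓ : Γ ⊆ Γ') (hΔ : Δ ⊆ Δ') (h : SatisfiedBy v Γ Δ) :
    SatisfiedBy v Γ' Δ' := fun hv =>
  let ⟨Q, hQ, hQv⟩ := h fun P hP => hv P (hΓ hP)
  ⟨Q, hΔ hQ, hQv⟩

theorem satisfiedBy_cons_left : SatisfiedBy v (P :: Γ) Δ ↔ (P.eval v → SatisfiedBy v Γ Δ) := by
  simp only [SatisfiedBy, List.forall_mem_cons, and_imp]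

theorem satisfiedBy_cons_right : SatisfiedBy v Γ (Q :: Δ) ↔ Q.eval v ∨ SatisfiedBy v Γ Δ := by
  simp only [SatisfiedBy, List.exists_mem_cons_iff]
  tauto

theorem satisfiedBy_append_singleton :
    SatisfiedBy v (Γ ++ [P]) Δ ↔ (P.eval v → SatisfiedBy v Γ Δ) := by
  simp only [SatisfiedBy, List.forall_mem_append, List.forall_mem_singleton]
  tauto

theorem Deriv.satisfiedBy (v : ℕ → Prop) {S : Sequent} (d : Deriv S) (hd : d.isProof) :
    SatisfiedBy v S.1 S.2 := by
  induction d with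
  | hyp => exact hd.elim
  | ax P => exact fun h => ⟨P, List.mem_singleton_self P, h P (List.mem_singleton_self P)⟩
  | permL Γ Γ' Δ P Q d ih =>
    exact (ih hd).mono ((List.Perm.swap Q P Γ').append_left Γ).subset (List.Subset.refl Δ)
  | permR Γ Δ Δ' P Q d ih =>
    exact (ih hd).mono (List.Subset.refl Γ) ((List.Perm.swap Q P Δ').append_left Δ).subset
  | cut Γ Δ Γ' Δ' P d₁ d₂ ih₁ ih₂ =>
    rcases satisfiedBy_cons_right.1 (ih₁ hd.1) with hP | h₁
    · have h₂ : SatisfiedBy v Γ' Δ' := satisfiedBy_append_singleton.1 (ih₂ hd.2) hP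
      exact h₂.mono (List.subset_append_right Γ Γ') (List.subset_append_right Δ Δ')
    · exact h₁.mono (List.subset_append_left Γ Γ') (List.subset_append_left Δ Δ')
  | contL Γ Δ P d ih =>
    exact (ih hd).mono (by grind) (List.Subset.refl Δ)
  | _ =>
    simp only [Deriv.isProof, satisfiedBy_append_singleton, satisfiedBy_cons_right,
      Formula.eval] at *
    tauto

theorem Deriv.valid {S : Sequent} (d : Deriv S) (hd : d.isProof) : Valid S.1 S.2 :=
  fun v => d.satisfiedBy v hd

theorem Valid.mono (hΓ : Γ ⊆ Γ') (hΔ : Δ ⊆ Δ') (h : Valid Γ Δ) : Valid Γ' Δ' :=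
  fun v => (h v).mono hΓ hΔ

theorem valid_neg_left : Valid (P.neg :: Γ) Δ ↔ Valid Γ (P :: Δ) := by
  simp only [Valid, satisfiedBy_cons_left, satisfiedBy_cons_right, Formula.eval, imp_iff_not_or,
    not_not]

theorem valid_neg_right : Valid Γ (P.neg :: Δ) ↔ Valid (P :: Γ) Δ := by
  simp only [Valid, satisfiedBy_cons_left, satisfiedBy_cons_right, Formula.eval, imp_iff_not_or]

theorem valid_and_left : Valid (P.and Q :: Γ) Δ ↔ Valid (P :: Q :: Γ) Δ := by
  simp only [Valid, satisfiedBy_cons_left, Formula.eval, and_imp]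

theorem valid_and_right : Valid Γ (P.and Q :: Δ) ↔ Valid Γ (P :: Δ) ∧ Valid Γ (Q :: Δ) := by
  simp only [Valid, satisfiedBy_cons_right, Formula.eval, and_or_right, forall_and]

theorem valid_or_left : Valid (P.or Q :: Γ) Δ ↔ Valid (P :: Γ) Δ ∧ Valid (Q :: Γ) Δ := by
  simp only [Valid, satisfiedBy_cons_left, Formula.eval, or_imp, forall_and]

theorem valid_or_right : Valid Γ (P.or Q :: Δ) ↔ Valid Γ (P :: Q :: Δ) := by
  simp only [Valid, satisfiedBy_cons_right, Formula.eval, or_assoc]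

theorem valid_imp_left : Valid (P.imp Q :: Γ) Δ ↔ Valid Γ (P :: Δ) ∧ Valid (Q :: Γ) Δ := by
  simp only [Valid, satisfiedBy_cons_left, satisfiedBy_cons_right, Formula.eval, imp_iff_not_or,
    not_or, not_not, and_or_right, forall_and]

theorem valid_imp_right : Valid Γ (P.imp Q :: Δ) ↔ Valid (P :: Γ) (Q :: Δ) := by
  simp only [Valid, satisfiedBy_cons_left, satisfiedBy_cons_right, Formula.eval, imp_iff_not_or,
    or_assoc, or_left_comm]

end Semantics

theorem CutFreeProvable.of_valid_atoms {as bs : List ℕ}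
    (h : Valid (as.map Formula.atom) (bs.map Formula.atom)) :
    CutFreeProvable (as.map Formula.atom) (bs.map Formula.atom) := by
  have h_left : ∀ P ∈ as.map Formula.atom, P.eval (· ∈ as) :=
    List.forall_mem_map.2 fun _ ha => ha
  obtain ⟨Q, hQ_right, hQ⟩ := h (· ∈ as) h_left
  obtain ⟨b, -, rfl⟩ := List.mem_map.1 hQ_right
  have hQ_left : Formula.atom b ∈ as.map Formula.atom := List.mem_map_of_mem hQ
  exact (CutFreeProvable.ax (.atom b)).mono (by simpa using hQ_left) (by simpa using hQ_right)

/-- Cut-free completeness for `Γ ⊢ Δ` in every context of atoms. Since the context absorbs the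
atoms, adding a formula to the sequent can be justified by structural induction on that formula. -/
def CompleteOverAtoms (Γ Δ : List Formula) : Prop :=
  ∀ as bs : List ℕ, Valid (Γ ++ as.map Formula.atom) (Δ ++ bs.map Formula.atom) →
    CutFreeProvable (Γ ++ as.map Formula.atom) (Δ ++ bs.map Formula.atom)

namespace CompleteOverAtoms

variable {Γ Δ : List Formula}

theorem nil : CompleteOverAtoms [] [] :=
  fun _ _ => CutFreeProvable.of_valid_atoms

theorem cons_atom_left (a : ℕ) (h : CompleteOverAtoms Γ Δ) :
    CompleteOverAtoms (.atom a :: Γ) Δ := fun as bs hv =>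
  have hperm : (Γ ++ (a :: as).map Formula.atom).Perm (.atom a :: (Γ ++ as.map Formula.atom)) :=
    List.perm_middle
  (h (a :: as) bs (hv.mono hperm.symm.subset (List.Subset.refl _))).permL hperm

theorem cons_atom_right (b : ℕ) (h : CompleteOverAtoms Γ Δ) :
    CompleteOverAtoms Γ (.atom b :: Δ) := fun as bs hv =>
  have hperm : (Δ ++ (b :: bs).map Formula.atom).Perm (.atom b :: (Δ ++ bs.map Formula.atom)) :=
    List.perm_middle
  (h as (b :: bs) (hv.mono (List.Subset.refl _) hperm.symm.subset)).permR hperm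

theorem cons (F : Formula) (h : CompleteOverAtoms Γ Δ) :
    CompleteOverAtoms (F :: Γ) Δ ∧ CompleteOverAtoms Γ (F :: Δ) := by
  induction F generalizing Γ Δ with
  | atom a => exact ⟨h.cons_atom_left a, h.cons_atom_right a⟩
  | neg P ih =>
    obtain ⟨hL, hR⟩ := ih h
    exact ⟨fun as bs hv => (hR as bs (valid_neg_left.1 hv)).negL,
      fun as bs hv => (hL as bs (valid_neg_right.1 hv)).negR⟩
  | and P Q ihP ihQ =>
    obtain ⟨hQL, hQR⟩ := ihQ h
    refine ⟨fun as bs hv => ((ihP hQL).1 as bs (valid_and_left.1 hv)).andL, fun as bs hv => ?_⟩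
    obtain ⟨hvP, hvQ⟩ := valid_and_right.1 hv
    exact ((ihP h).2 as bs hvP).andR (hQR as bs hvQ)
  | or P Q ihP ihQ =>
    obtain ⟨hQL, hQR⟩ := ihQ h
    refine ⟨fun as bs hv => ?_, fun as bs hv => ((ihP hQR).2 as bs (valid_or_right.1 hv)).orR⟩
    obtain ⟨hvP, hvQ⟩ := valid_or_left.1 hv
    exact ((ihP h).1 as bs hvP).orL (hQL as bs hvQ)
  | imp P Q ihP ihQ =>
    obtain ⟨hQL, hQR⟩ := ihQ h
    refine ⟨fun as bs hv => ?_, fun as bs hv => ((ihP hQR).1 as bs (valid_imp_right.1 hv)).impR⟩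
    obtain ⟨hvP, hvQ⟩ := valid_imp_left.1 hv
    exact ((ihP h).2 as bs hvP).impL (hQL as bs hvQ)

end CompleteOverAtoms

theorem completeOverAtoms (Γ Δ : List Formula) : CompleteOverAtoms Γ Δ := by
  induction Γ with
  | cons P _ ih => exact (ih.cons P).1
  | nil =>
    induction Δ with
    | cons Q _ ih => exact (ih.cons Q).2
    | nil => exact .nil

theorem Valid.cutFreeProvable {Γ Δ : List Formula} (h : Valid Γ Δ) : CutFreeProvable Γ Δ := by
  simpa using completeOverAtoms Γ Δ [] [] (by simpa using h)

/-- Gentzen's Hauptsatz for LKp.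
The cut rule is admissible in LKp: every sequent provable in LKp has a proof
in LKp containing no instance of the cut rule. -/
theorem hauptsatz (S : Sequent) (Φ : Deriv S) (hΦ : Φ.isProof) :
    ∃ Ψ : Deriv S, Ψ.isProof ∧ Ψ.cutFree :=
  (Φ.valid hΦ).cutFreeProvable

end LKp
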